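/- Let ρ ∈ H^{1,1}_loc(ℝ^d, dx) with ρ > 0 dx-a.e. and 1/ρ ∈ L^1_loc(ℝ^d, dx) (implied by ρ ∈ A₂), and let φ be measurable with c̃^{-1} ≤ φ ≤ c̃. Then the symmetric bilinear form E(f,g) := (1/2)∫_{ℝ^d} ∇f·∇g ρφ dx, defined for f,g ∈ C_0^∞(ℝ^d), is closable on L²(ℝ^d, ρφ dx). -/

import Mathlib

/-!
With `w = ρφ`, the functions `√w ∇uₙ` are Cauchy in the unweighted `L²(dx)`, hence converge there to
some `F`, and `E(uₙ, uₙ) → ½‖F‖²`. For a test function `ψ` and a vector `v`, integration by parts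
gives
`∫ ⟪√(1/w) ψ v, √w ∇uₙ⟫ dx = ∫ ψ ∂ᵥuₙ dx = -∫ uₙ ∂ᵥψ dx = -∫ (√(1/w) ∂ᵥψ) (√w uₙ) dx`.
Since `1/w` is locally integrable, `√(1/w) ψ v` and `√(1/w) ∂ᵥψ` are in `L²`, so the left side tends
to `∫ ⟪√(1/w) ψ v, F⟫` and the right side to `0` because `√w uₙ → 0` in `L²`. Hence the locally
integrable field `√(1/w) F` annihilates all test functions, so it vanishes a.e., and `F = 0`.
-/

open MeasureTheory Filter

section WeightedForm

variable {d : ℕ}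

local notation "𝔼" => EuclideanSpace ℝ (Fin d)

lemma continuous_gradient_of_contDiff {u : 𝔼 → ℝ} (hu : ContDiff ℝ (⊤ : ℕ∞) u) :
    Continuous (gradient u) :=
  (InnerProductSpace.toDual ℝ 𝔼).symm.continuous.comp (hu.continuous_fderiv (by simp))

lemma HasCompactSupport.gradient_real {u : 𝔼 → ℝ} (hu : HasCompactSupport u) :
    HasCompactSupport (gradient u) :=
  (hu.fderiv (𝕜 := ℝ)).comp_left (g := (InnerProductSpace.toDual ℝ 𝔼).symm) (map_zero _)

lemma aestronglyMeasurable_sqrt {w : 𝔼 → ℝ} (hw : AEStronglyMeasurable w volume) :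
    AEStronglyMeasurable (fun x => √(w x)) volume :=
  Real.continuous_sqrt.comp_aestronglyMeasurable hw

/-- Multiplication by `√w` sends continuous compactly supported functions into `L²(dx)`. Used both
for the weight and for its inverse. -/
lemma memLp_sqrt_smul {G : Type*} [NormedAddCommGroup G] [InnerProductSpace ℝ G]
    {w : 𝔼 → ℝ} (hw : LocallyIntegrable w volume) (hpos : ∀ᵐ x, 0 < w x)
    {h : 𝔼 → G} (hc : Continuous h) (hs : HasCompactSupport h) :
    MemLp (fun x => √(w x) • h x) 2 volume := by
  have hm : AEStronglyMeasurable (fun x => √(w x) • h x) volume :=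
    (aestronglyMeasurable_sqrt hw.aestronglyMeasurable).smul hc.aestronglyMeasurable
  rw [memLp_two_iff_integrable_sq_norm hm]
  have hs2 : HasCompactSupport (fun x => ‖h x‖ ^ 2) :=
    hs.comp_left (g := fun y : G => ‖y‖ ^ 2) (by simp)
  refine (hw.integrable_smul_left_of_hasCompactSupport (hc.norm.pow 2) hs2).congr ?_
  filter_upwards [hpos] with x hx
  rw [norm_smul, mul_pow, Real.norm_eq_abs, sq_abs, Real.sq_sqrt hx.le, smul_eq_mul, mul_comm]
  rfl

lemma inner_toLp_eq {G : Type*} [NormedAddCommGroup G] [InnerProductSpace ℝ G]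
    {f g : 𝔼 → G} (hf : MemLp f 2 volume) (hg : MemLp g 2 volume) :
    inner ℝ (hf.toLp f) (hg.toLp g) = ∫ x, inner ℝ (f x) (g x) := by
  rw [L2.inner_def]
  refine integral_congr_ae ?_
  filter_upwards [hf.coeFn_toLp, hg.coeFn_toLp] with x h1 h2
  rw [h1, h2]

lemma norm_toLp_sqrt_smul_sq {G : Type*} [NormedAddCommGroup G] [InnerProductSpace ℝ G]
    {w : 𝔼 → ℝ} (hpos : ∀ᵐ x, 0 < w x) {h : 𝔼 → G}
    (hf : MemLp (fun x => √(w x) • h x) 2 volume) :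
    ‖hf.toLp _‖ ^ 2 = ∫ x, ‖h x‖ ^ 2 * w x := by
  rw [← real_inner_self_eq_norm_sq, inner_toLp_eq]
  refine integral_congr_ae ?_
  filter_upwards [hpos] with x hx
  rw [real_inner_self_eq_norm_sq, norm_smul, mul_pow, Real.norm_eq_abs, sq_abs,
    Real.sq_sqrt hx.le, mul_comm]

lemma integral_mul_inner_gradient {u ψ : 𝔼 → ℝ}
    (hu : ContDiff ℝ (⊤ : ℕ∞) u) (hψ : ContDiff ℝ (⊤ : ℕ∞) ψ) (hψs : HasCompactSupport ψ) (v : 𝔼) :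
    ∫ x, ψ x * inner ℝ v (gradient u x) = - ∫ x, inner ℝ v (gradient ψ x) * u x := by
  have hcu : Continuous fun x => inner ℝ v (gradient u x) :=
    continuous_const.inner (continuous_gradient_of_contDiff hu)
  have hcψ : Continuous fun x => inner ℝ v (gradient ψ x) :=
    continuous_const.inner (continuous_gradient_of_contDiff hψ)
  have hsψ : HasCompactSupport fun x => inner ℝ v (gradient ψ x) :=
    hψs.gradient_real.comp_left (g := fun y : 𝔼 => inner ℝ v y) (by simp)
  have key := integral_mul_fderiv_eq_neg_fderiv_mul_of_integrable (μ := (volume : Measure 𝔼))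
    (f := ψ) (g := u) (v := v)
  simp only [← inner_gradient_left, real_inner_comm] at key hcu hcψ hsψ ⊢
  refine key ?_ ?_ ?_ (fun x _ => hψ.differentiable (by simp) x)
    (fun x _ => hu.differentiable (by simp) x)
  · exact (hcψ.mul hu.continuous).integrable_of_hasCompactSupport hsψ.mul_right
  · exact (hψ.continuous.mul hcu).integrable_of_hasCompactSupport hψs.mul_right
  · exact (hψ.continuous.mul hu.continuous).integrable_of_hasCompactSupport hψs.mul_right

lemma locallyIntegrable_sqrt_smul {w : 𝔼 → ℝ} (hw : LocallyIntegrable w volume)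
    (hpos : ∀ᵐ x, 0 < w x) {F : 𝔼 → 𝔼} (hF : MemLp F 2 volume) :
    LocallyIntegrable (fun x => √(w x) • F x) volume := by
  intro x
  obtain ⟨s, hs, hi⟩ := hw x
  refine ⟨s, hs, ?_⟩
  have h1 : MemLp (fun x => √(w x)) 2 (volume.restrict s) := by
    rw [memLp_two_iff_integrable_sq
      (aestronglyMeasurable_sqrt hw.aestronglyMeasurable).restrict]
    refine Integrable.congr hi ?_
    filter_upwards [ae_restrict_of_ae hpos] with y hy
    rw [Real.sq_sqrt hy.le]
  exact memLp_one_iff_integrable.1 ((hF.restrict s).smul h1)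

/-- Identification of the limit: if `√w uₙ → 0` and `√w ∇uₙ → F` in `L²(dx)`, then `F = 0`. -/
lemma limit_eq_zero {w : 𝔼 → ℝ}
    (hw' : LocallyIntegrable (fun x => (w x)⁻¹) volume) (hpos : ∀ᵐ x, 0 < w x)
    {u : ℕ → 𝔼 → ℝ} (hu : ∀ n, ContDiff ℝ (⊤ : ℕ∞) (u n))
    (hU : ∀ n, MemLp (fun x => √(w x) • u n x) 2 volume)
    (hG : ∀ n, MemLp (fun x => √(w x) • gradient (u n) x) 2 volume)
    (hU0 : Tendsto (fun n => (hU n).toLp _) atTop (nhds 0))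
    {F : Lp 𝔼 2 (volume : Measure 𝔼)}
    (hGF : Tendsto (fun n => (hG n).toLp _) atTop (nhds F)) : F = 0 := by
  have hpos' : ∀ᵐ x, 0 < (w x)⁻¹ := by
    filter_upwards [hpos] with x hx using inv_pos.2 hx
  have hone : ∀ᵐ x, √(w x)⁻¹ * √(w x) = 1 := by
    filter_upwards [hpos] with x hx
    rw [Real.sqrt_inv, inv_mul_cancel₀ (Real.sqrt_pos.2 hx).ne']
  have hFloc := locallyIntegrable_sqrt_smul hw' hpos' (Lp.memLp F)
  have hzero : ∀ᵐ x, √(w x)⁻¹ • F x = 0 := by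
    refine ae_eq_zero_of_integral_contDiff_smul_eq_zero hFloc fun ψ hψ hψs => ?_
    have hint := hFloc.integrable_smul_left_of_hasCompactSupport hψ.continuous hψs
    refine ext_inner_left ℝ fun v => ?_
    rw [← integral_inner hint, inner_zero_right]
    have hA : MemLp (fun x => √(w x)⁻¹ • (ψ x • v)) 2 volume :=
      memLp_sqrt_smul hw' hpos' (hψ.continuous.smul continuous_const) hψs.smul_right
    have hB : MemLp (fun x => √(w x)⁻¹ • inner ℝ v (gradient ψ x)) 2 volume :=
      memLp_sqrt_smul hw' hpos'
        (continuous_const.inner (continuous_gradient_of_contDiff hψ))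
        (hψs.gradient_real.comp_left (g := fun y : 𝔼 => inner ℝ v y) (by simp))
    have hparts : ∀ n, inner ℝ (hA.toLp _) ((hG n).toLp _)
        = - inner ℝ (hB.toLp _) ((hU n).toLp _) := by
      intro n
      rw [inner_toLp_eq, inner_toLp_eq]
      have e1 : ∫ x, inner ℝ (√(w x)⁻¹ • (ψ x • v)) (√(w x) • gradient (u n) x)
          = ∫ x, ψ x * inner ℝ v (gradient (u n) x) := by
        refine integral_congr_ae ?_
        filter_upwards [hone] with x hx
        simp only [real_inner_smul_left, real_inner_smul_right]
        linear_combination (ψ x * inner ℝ v (gradient (u n) x)) * hx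
      have e2 : ∫ x, inner ℝ (√(w x)⁻¹ • inner ℝ v (gradient ψ x)) (√(w x) • u n x)
          = ∫ x, inner ℝ v (gradient ψ x) * u n x := by
        refine integral_congr_ae ?_
        filter_upwards [hone] with x hx
        simp only [smul_eq_mul, RCLike.inner_apply, conj_trivial]
        linear_combination (u n x * inner ℝ v (gradient ψ x)) * hx
      rw [e1, e2, integral_mul_inner_gradient (hu n) hψ hψs]
    have hl : Tendsto (fun n => inner ℝ (hA.toLp _) ((hG n).toLp _)) atTop
        (nhds (inner ℝ (hA.toLp _) F)) := tendsto_const_nhds.inner hGF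
    have hr : Tendsto (fun n => inner ℝ (hA.toLp _) ((hG n).toLp _)) atTop (nhds 0) := by
      simp only [hparts]
      have := (tendsto_const_nhds (x := hB.toLp _) (f := atTop (α := ℕ))).inner (𝕜 := ℝ) hU0
      simpa using this.neg
    have hF0 := tendsto_nhds_unique hl hr
    rw [L2.inner_def] at hF0
    rw [← hF0]
    refine integral_congr_ae ?_
    filter_upwards [hA.coeFn_toLp] with x hx
    rw [hx]
    simp only [real_inner_smul_left, real_inner_smul_right]
    ring
  rw [Lp.eq_zero_iff_ae_eq_zero]
  filter_upwards [hzero, hpos'] with x hx hx'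
  exact (smul_eq_zero.1 hx).resolve_left (Real.sqrt_pos.2 hx').ne'

/-- Closability for a general positive weight `w` with `w` and `1/w` locally integrable. -/
lemma closable_of_weight {w : 𝔼 → ℝ} (hw : LocallyIntegrable w volume)
    (hw' : LocallyIntegrable (fun x => (w x)⁻¹) volume) (hpos : ∀ᵐ x, 0 < w x)
    (u : ℕ → 𝔼 → ℝ) (hu : ∀ n, ContDiff ℝ (⊤ : ℕ∞) (u n) ∧ HasCompactSupport (u n))
    (hu0 : Tendsto (fun n => ∫ x, (u n x) ^ 2 * w x) atTop (nhds 0))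
    (hcau : ∀ ε : ℝ, 0 < ε → ∃ N : ℕ, ∀ j k, N ≤ j → N ≤ k →
        (1 / 2) * (∫ x, ‖gradient (u j) x - gradient (u k) x‖ ^ 2 * w x) ≤ ε) :
    Tendsto (fun n => (1 / 2) * ∫ x, ‖gradient (u n) x‖ ^ 2 * w x) atTop (nhds 0) := by
  have hU : ∀ n, MemLp (fun x => √(w x) • u n x) 2 volume := fun n =>
    memLp_sqrt_smul hw hpos (hu n).1.continuous (hu n).2
  have hG : ∀ n, MemLp (fun x => √(w x) • gradient (u n) x) 2 volume := fun n =>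
    memLp_sqrt_smul hw hpos (continuous_gradient_of_contDiff (hu n).1) (hu n).2.gradient_real
  have hU0 : Tendsto (fun n => (hU n).toLp _) atTop (nhds 0) := by
    rw [tendsto_zero_iff_norm_tendsto_zero]
    have h2 : Tendsto (fun n => ‖(hU n).toLp _‖ ^ 2) atTop (nhds 0) := by
      simp only [norm_toLp_sqrt_smul_sq hpos]
      simpa using hu0
    simpa using h2.sqrt
  have hdiff : ∀ j k, ‖(hG j).toLp _ - (hG k).toLp _‖ ^ 2
      = ∫ x, ‖gradient (u j) x - gradient (u k) x‖ ^ 2 * w x := by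
    intro j k
    rw [← MemLp.toLp_sub, ← real_inner_self_eq_norm_sq, inner_toLp_eq]
    refine integral_congr_ae ?_
    filter_upwards [hpos] with x hx
    rw [real_inner_self_eq_norm_sq, Pi.sub_apply, ← smul_sub, norm_smul, mul_pow,
      Real.norm_eq_abs, sq_abs, Real.sq_sqrt hx.le, mul_comm]
  have hC : CauchySeq (fun n => (hG n).toLp _) := by
    rw [Metric.cauchySeq_iff]
    intro ε hε
    obtain ⟨N, hN⟩ := hcau (ε ^ 2 / 4) (by positivity)
    refine ⟨N, fun j hj k hk => ?_⟩
    have h := hN j k hj hk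
    rw [← hdiff j k] at h
    rw [dist_eq_norm]
    refine lt_of_pow_lt_pow_left₀ 2 hε.le ?_
    have : 0 < ε ^ 2 := by positivity
    linarith
  obtain ⟨F, hF⟩ := cauchySeq_tendsto_of_complete hC
  have hF0 : F = 0 := limit_eq_zero hw' hpos (fun n => (hu n).1) hU hG hU0 hF
  rw [hF0, tendsto_zero_iff_norm_tendsto_zero] at hF
  have h2 := (hF.pow 2).const_mul (1 / 2 : ℝ)
  simp only [norm_toLp_sqrt_smul_sq hpos] at h2
  simpa using h2

lemma LocallyIntegrable.mul_bdd_right {f φ : 𝔼 → ℝ} (hf : LocallyIntegrable f volume)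
    (hφ : Measurable φ) {C : ℝ} (hC : ∀ x, ‖φ x‖ ≤ C) :
    LocallyIntegrable (fun x => f x * φ x) volume := by
  intro x
  obtain ⟨s, hs, hi⟩ := hf x
  exact ⟨s, hs, Integrable.mul_bdd hi hφ.aestronglyMeasurable (.of_forall hC)⟩

end WeightedForm

/-- Closability of the weighted Dirichlet form `E(f,g) = (1/2)∫ ∇f·∇g ρφ dx` on
`L²(ρφ dx)`: if `ρ ∈ H^{1,1}_loc`, `ρ > 0` a.e., `1/ρ ∈ L¹_loc`, and `c⁻¹ ≤ φ ≤ c`, then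
for every sequence `(u_n) ⊂ C_0^∞` with `u_n → 0` in `L²(ρφ dx)` which is `E`-Cauchy,
one has `E(u_n,u_n) → 0`. -/
theorem weighted_form_closable {d : ℕ} (hd : 1 ≤ d)
    (ρ φ : EuclideanSpace ℝ (Fin d) → ℝ)
    (hρloc : LocallyIntegrable ρ volume)
    (hρgrad : ∃ g : EuclideanSpace ℝ (Fin d) → EuclideanSpace ℝ (Fin d),
      LocallyIntegrable (fun x => ‖g x‖) volume ∧
      ∀ ψ : EuclideanSpace ℝ (Fin d) → ℝ, ContDiff ℝ (⊤ : ℕ∞) ψ → HasCompactSupport ψ →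
        (∫ x, ρ x • gradient ψ x) = - ∫ x, ψ x • g x)
    (hρpos : ∀ᵐ x ∂(volume : Measure (EuclideanSpace ℝ (Fin d))), 0 < ρ x)
    (hρinv : LocallyIntegrable (fun x => (ρ x)⁻¹) volume)
    (c : ℝ) (hc : 1 ≤ c) (hφm : Measurable φ) (hφ : ∀ x, c⁻¹ ≤ φ x ∧ φ x ≤ c) :
    ∀ u : ℕ → EuclideanSpace ℝ (Fin d) → ℝ,
      (∀ n, ContDiff ℝ (⊤ : ℕ∞) (u n) ∧ HasCompactSupport (u n)) →
      Tendsto (fun n => ∫ x, (u n x) ^ 2 * (ρ x * φ x)) atTop (nhds 0) →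
      (∀ ε : ℝ, 0 < ε → ∃ N : ℕ, ∀ j k, N ≤ j → N ≤ k →
        (1 / 2) * (∫ x, ‖gradient (u j) x - gradient (u k) x‖ ^ 2 * (ρ x * φ x)) ≤ ε) →
      Tendsto (fun n => (1 / 2) * ∫ x, ‖gradient (u n) x‖ ^ 2 * (ρ x * φ x))
        atTop (nhds 0) := by
  have hc0 : 0 < c⁻¹ := by positivity
  have hφpos : ∀ x, 0 < φ x := fun x => hc0.trans_le (hφ x).1
  have hw : LocallyIntegrable (fun x => ρ x * φ x) volume :=
    LocallyIntegrable.mul_bdd_right hρloc hφm (C := c) fun x => by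
      rw [Real.norm_of_nonneg (hφpos x).le]
      exact (hφ x).2
  have hw' : LocallyIntegrable (fun x => (ρ x * φ x)⁻¹) volume := by
    simp only [mul_inv]
    refine LocallyIntegrable.mul_bdd_right hρinv hφm.inv (C := c) fun x => ?_
    rw [Real.norm_of_nonneg (inv_pos.2 (hφpos x)).le]
    exact inv_le_of_inv_le₀ (by positivity) (hφ x).1
  have hpos : ∀ᵐ x, 0 < ρ x * φ x := by
    filter_upwards [hρpos] with x hx using mul_pos hx (hφpos x)
  exact closable_of_weight hw hw' hpos
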